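/- arXiv:0907.1000 — 6 statements merged into one kernel-verified Lean document; each statement's English description precedes it below -/
import Mathlib

section
/- Let Ω ⊆ ℝ² be open, let ε > 0, and let w : Ω × ℝ → ℂ, B : Ω × ℝ → ℝ², ξ : Ω × ℝ → ℝ be smooth (not necessarily solutions of any equation). Then the Ginzburg-Landau energy density satisfies, pointwise on Ω × ℝ: ∂_t g⁰_ε(w,B) = div(∂_ξ w, ∇_B w) + curl((curl B)(∂_t B + ∇ξ)) − (∂_ξ w, Δ_B w + (w/ε²)(1−|w|²)) − (∂_t B + ∇ξ) · (∇^⊥ curl B + (iw, ∇_B w)), where div(∂_ξ w, ∇_B w) denotes the divergence of the ℝ²-valued field with components (∂_ξ w, ∂_j^B w). -/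
noncomputable section

open Complex

/-- Real inner product of two complex numbers: `(a,b) = Re a · Re b + Im a · Im b`. -/
def rip (a b : ℂ) : ℝ := a.re * b.re + a.im * b.im

/-- `(a, X)` for `a : ℂ` and `X : ℂ²`: the vector in `ℝ²` with components `(a,X₁)`, `(a,X₂)`. -/
def ripv (a : ℂ) (X : ℂ × ℂ) : ℝ × ℝ := (rip a X.1, rip a X.2)

/-- Dot product of `X : ℂ²` with `Z : ℝ²`: `X·Z = X₁Z₁ + X₂Z₂ ∈ ℂ`. -/
def cdotR (X : ℂ × ℂ) (Z : ℝ × ℝ) : ℂ := X.1 * (Z.1 : ℂ) + X.2 * (Z.2 : ℂ)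

/-- Euclidean dot product on `ℝ²`. -/
def rdot (a b : ℝ × ℝ) : ℝ := a.1 * b.1 + a.2 * b.2

/-- Perpendicular of a vector: `Z^⊥ = (−Z₂, Z₁)`. -/
def perp (a : ℝ × ℝ) : ℝ × ℝ := (-a.2, a.1)

/-! ### Spatial differential operators for functions on `ℝ²` -/

/-- First spatial partial derivative `∂₁`. -/
def pd1 {E : Type*} [NormedAddCommGroup E] [NormedSpace ℝ E]
    (f : ℝ × ℝ → E) (x : ℝ × ℝ) : E := fderiv ℝ f x (1, 0)

/-- Second spatial partial derivative `∂₂`. -/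
def pd2 {E : Type*} [NormedAddCommGroup E] [NormedSpace ℝ E]
    (f : ℝ × ℝ → E) (x : ℝ × ℝ) : E := fderiv ℝ f x (0, 1)

/-- Gradient `∇g = (∂₁g, ∂₂g)`. -/
def sgrad (g : ℝ × ℝ → ℝ) (x : ℝ × ℝ) : ℝ × ℝ := (pd1 g x, pd2 g x)

/-- Perpendicular gradient `∇^⊥ g = (−∂₂g, ∂₁g)`. -/
def sgradPerp (g : ℝ × ℝ → ℝ) (x : ℝ × ℝ) : ℝ × ℝ := (-(pd2 g x), pd1 g x)

/-- Laplacian `Δg = ∂₁∂₁g + ∂₂∂₂g`. -/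
def slap (g : ℝ × ℝ → ℝ) (x : ℝ × ℝ) : ℝ := pd1 (pd1 g) x + pd2 (pd2 g) x

/-- Curl of a vector field: `curl X = ∂₁X₂ − ∂₂X₁`. -/
def scurl (X : ℝ × ℝ → ℝ × ℝ) (x : ℝ × ℝ) : ℝ := (pd1 X x).2 - (pd2 X x).1

/-- Divergence of a vector field: `div X = ∂₁X₁ + ∂₂X₂`. -/
def sdiv (X : ℝ × ℝ → ℝ × ℝ) (x : ℝ × ℝ) : ℝ := (pd1 X x).1 + (pd2 X x).2

/-- Covariant partial derivative `∂₁^A u = ∂₁u − iA₁u`. -/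
def cpd1 (A : ℝ × ℝ → ℝ × ℝ) (u : ℝ × ℝ → ℂ) (x : ℝ × ℝ) : ℂ :=
  pd1 u x - Complex.I * ((A x).1 : ℂ) * u x

/-- Covariant partial derivative `∂₂^A u = ∂₂u − iA₂u`. -/
def cpd2 (A : ℝ × ℝ → ℝ × ℝ) (u : ℝ × ℝ → ℂ) (x : ℝ × ℝ) : ℂ :=
  pd2 u x - Complex.I * ((A x).2 : ℂ) * u x

/-- Covariant gradient `∇_A u = ∇u − iAu`. -/
def covGrad (A : ℝ × ℝ → ℝ × ℝ) (u : ℝ × ℝ → ℂ) (x : ℝ × ℝ) : ℂ × ℂ :=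
  (cpd1 A u x, cpd2 A u x)

/-- Covariant Laplacian `Δ_A u = ∂₁^A ∂₁^A u + ∂₂^A ∂₂^A u`. -/
def covLap (A : ℝ × ℝ → ℝ × ℝ) (u : ℝ × ℝ → ℂ) (x : ℝ × ℝ) : ℂ :=
  cpd1 A (cpd1 A u) x + cpd2 A (cpd2 A u) x

/-- Vorticity `μ(u,A) = curl((iu, ∇_A u) + A)`. -/
def svort (u : ℝ × ℝ → ℂ) (A : ℝ × ℝ → ℝ × ℝ) (x : ℝ × ℝ) : ℝ :=
  scurl (fun y => ripv (Complex.I * u y) (covGrad A u y) + A y) x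

/-- Ginzburg–Landau energy density
`g⁰_ε(u,A) = ½(|∇_A u|² + (1−|u|²)²/(2ε²) + (curl A)²)`. -/
def glEnergy (ε : ℝ) (u : ℝ × ℝ → ℂ) (A : ℝ × ℝ → ℝ × ℝ) (x : ℝ × ℝ) : ℝ :=
  (1 / 2) * (Complex.normSq (cpd1 A u x) + Complex.normSq (cpd2 A u x)
    + (1 - Complex.normSq (u x)) ^ 2 / (2 * ε ^ 2) + (scurl A x) ^ 2)

/-! ### Space-time differential operators for functions on `ℝ² × ℝ`
(spatial operators act in the spatial variables, `tdt` is the time derivative) -/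

/-- First spatial partial derivative `∂₁`. -/
def sp1 {E : Type*} [NormedAddCommGroup E] [NormedSpace ℝ E]
    (f : (ℝ × ℝ) × ℝ → E) (z : (ℝ × ℝ) × ℝ) : E := fderiv ℝ f z ((1, 0), 0)

/-- Second spatial partial derivative `∂₂`. -/
def sp2 {E : Type*} [NormedAddCommGroup E] [NormedSpace ℝ E]
    (f : (ℝ × ℝ) × ℝ → E) (z : (ℝ × ℝ) × ℝ) : E := fderiv ℝ f z ((0, 1), 0)

/-- Time derivative `∂_t`. -/
def tdt {E : Type*} [NormedAddCommGroup E] [NormedSpace ℝ E]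
    (f : (ℝ × ℝ) × ℝ → E) (z : (ℝ × ℝ) × ℝ) : E := fderiv ℝ f z ((0, 0), 1)

/-- Spatial gradient. -/
def tgrad (g : (ℝ × ℝ) × ℝ → ℝ) (z : (ℝ × ℝ) × ℝ) : ℝ × ℝ := (sp1 g z, sp2 g z)

/-- Spatial perpendicular gradient `∇^⊥ g = (−∂₂g, ∂₁g)`. -/
def tgradPerp (g : (ℝ × ℝ) × ℝ → ℝ) (z : (ℝ × ℝ) × ℝ) : ℝ × ℝ := (-(sp2 g z), sp1 g z)

/-- Spatial Laplacian. -/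
def tlap (g : (ℝ × ℝ) × ℝ → ℝ) (z : (ℝ × ℝ) × ℝ) : ℝ := sp1 (sp1 g) z + sp2 (sp2 g) z

/-- Spatial curl of a time-dependent vector field. -/
def tcurl (X : (ℝ × ℝ) × ℝ → ℝ × ℝ) (z : (ℝ × ℝ) × ℝ) : ℝ := (sp1 X z).2 - (sp2 X z).1

/-- Spatial divergence of a time-dependent vector field. -/
def tdiv (X : (ℝ × ℝ) × ℝ → ℝ × ℝ) (z : (ℝ × ℝ) × ℝ) : ℝ := (sp1 X z).1 + (sp2 X z).2

/-- Covariant partial derivative `∂₁^B w = ∂₁w − iB₁w`. -/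
def tcpd1 (B : (ℝ × ℝ) × ℝ → ℝ × ℝ) (w : (ℝ × ℝ) × ℝ → ℂ) (z : (ℝ × ℝ) × ℝ) : ℂ :=
  sp1 w z - Complex.I * ((B z).1 : ℂ) * w z

/-- Covariant partial derivative `∂₂^B w = ∂₂w − iB₂w`. -/
def tcpd2 (B : (ℝ × ℝ) × ℝ → ℝ × ℝ) (w : (ℝ × ℝ) × ℝ → ℂ) (z : (ℝ × ℝ) × ℝ) : ℂ :=
  sp2 w z - Complex.I * ((B z).2 : ℂ) * w z

/-- Covariant gradient `∇_B w = ∇w − iBw` (spatial). -/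
def tcovGrad (B : (ℝ × ℝ) × ℝ → ℝ × ℝ) (w : (ℝ × ℝ) × ℝ → ℂ) (z : (ℝ × ℝ) × ℝ) : ℂ × ℂ :=
  (tcpd1 B w z, tcpd2 B w z)

/-- Covariant Laplacian `Δ_B w`. -/
def tcovLap (B : (ℝ × ℝ) × ℝ → ℝ × ℝ) (w : (ℝ × ℝ) × ℝ → ℂ) (z : (ℝ × ℝ) × ℝ) : ℂ :=
  tcpd1 B (tcpd1 B w) z + tcpd2 B (tcpd2 B w) z

/-- Covariant time derivative `∂_ξ w = ∂_t w + iξw`. -/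
def covt (ξ : (ℝ × ℝ) × ℝ → ℝ) (w : (ℝ × ℝ) × ℝ → ℂ) (z : (ℝ × ℝ) × ℝ) : ℂ :=
  tdt w z + Complex.I * (ξ z : ℂ) * w z

/-- Vorticity `μ(w,B) = curl((iw, ∇_B w) + B)`. -/
def tvort (w : (ℝ × ℝ) × ℝ → ℂ) (B : (ℝ × ℝ) × ℝ → ℝ × ℝ) (z : (ℝ × ℝ) × ℝ) : ℝ :=
  tcurl (fun y => ripv (Complex.I * w y) (tcovGrad B w y) + B y) z

/-- Velocity `V(w,B,ξ) = ∇(iw,∂_ξ w) − ∂_t(iw,∇_B w) − (∂_t B + ∇ξ)`. -/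
def tvel (w : (ℝ × ℝ) × ℝ → ℂ) (B : (ℝ × ℝ) × ℝ → ℝ × ℝ) (ξ : (ℝ × ℝ) × ℝ → ℝ)
    (z : (ℝ × ℝ) × ℝ) : ℝ × ℝ :=
  tgrad (fun y => rip (Complex.I * w y) (covt ξ w y)) z
    - tdt (fun y => ripv (Complex.I * w y) (tcovGrad B w y)) z
    - (tdt B z + tgrad ξ z)

/-- Time-dependent Ginzburg–Landau energy density. -/
def tglEnergy (ε : ℝ) (w : (ℝ × ℝ) × ℝ → ℂ) (B : (ℝ × ℝ) × ℝ → ℝ × ℝ)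
    (z : (ℝ × ℝ) × ℝ) : ℝ :=
  (1 / 2) * (Complex.normSq (tcpd1 B w z) + Complex.normSq (tcpd2 B w z)
    + (1 - Complex.normSq (w z)) ^ 2 / (2 * ε ^ 2) + (tcurl B z) ^ 2)

/-- A smooth function has differentiable derivative, symmetric second derivative. -/
lemma aux_second {E : Type*} [NormedAddCommGroup E] [NormedSpace ℝ E]
    {f : (ℝ × ℝ) × ℝ → E} {z : (ℝ × ℝ) × ℝ} (hf : ContDiffAt ℝ (⊤ : ℕ∞) f z) :
    ∃ D : ((ℝ × ℝ) × ℝ) → ((ℝ × ℝ) × ℝ) → E,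
      (∀ v u, D v u = D u v) ∧ HasFDerivAt f (fderiv ℝ f z) z ∧
      (∀ u, ∃ L : ((ℝ × ℝ) × ℝ) →L[ℝ] E,
        HasFDerivAt (fun y => fderiv ℝ f y u) L z ∧ ∀ v, L v = D v u) := by
  refine ⟨fun v u => fderiv ℝ (fderiv ℝ f) z v u, ?_, ?_, ?_⟩
  · intro v u
    exact (hf.isSymmSndFDerivAt (by
      simp only [minSmoothness_of_isRCLikeNormedField]
      exact WithTop.coe_le_coe.2 (le_top : (2 : ℕ∞) ≤ ⊤))).eq v u
  · exact (hf.differentiableAt (by simp)).hasFDerivAt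
  · intro u
    have h1 : ContDiffAt ℝ 1 (fderiv ℝ f) z := hf.fderiv_right (by norm_cast)
    have h2 := (h1.differentiableAt (by simp)).hasFDerivAt
    exact ⟨_, h2.clm_apply (hasFDerivAt_const u z), fun v => by simp⟩

lemma aux_cov {f w : (ℝ × ℝ) × ℝ → ℂ} {b : (ℝ × ℝ) × ℝ → ℝ} {z : (ℝ × ℝ) × ℝ}
    {F W : ((ℝ × ℝ) × ℝ) →L[ℝ] ℂ} {db : ((ℝ × ℝ) × ℝ) →L[ℝ] ℝ} (c : ℂ)
    (hf : HasFDerivAt f F z) (hw : HasFDerivAt w W z) (hb : HasFDerivAt b db z) :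
    ∃ L : ((ℝ × ℝ) × ℝ) →L[ℝ] ℂ,
      HasFDerivAt (fun y => f y + c * (b y : ℂ) * w y) L z ∧
      ∀ v, L v = F v + c * (db v : ℂ) * w z + c * (b z : ℂ) * W v := by
  have h1 : HasFDerivAt (fun y => (b y : ℂ)) (Complex.ofRealCLM.comp db) z :=
    Complex.ofRealCLM.hasFDerivAt.comp z hb
  refine ⟨_, hf.add ((h1.const_mul c).mul hw), fun v => ?_⟩
  simp
  ring

lemma aux_rip {a b : (ℝ × ℝ) × ℝ → ℂ} {z : (ℝ × ℝ) × ℝ}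
    {A C : ((ℝ × ℝ) × ℝ) →L[ℝ] ℂ}
    (ha : HasFDerivAt a A z) (hb : HasFDerivAt b C z) :
    ∃ L : ((ℝ × ℝ) × ℝ) →L[ℝ] ℝ,
      HasFDerivAt (fun y => rip (a y) (b y)) L z ∧
      ∀ v, L v = rip (A v) (b z) + rip (a z) (C v) := by
  have r1 : HasFDerivAt (fun y => (a y).re) (Complex.reCLM.comp A) z :=
    Complex.reCLM.hasFDerivAt.comp z ha
  have r2 : HasFDerivAt (fun y => (a y).im) (Complex.imCLM.comp A) z :=
    Complex.imCLM.hasFDerivAt.comp z ha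
  have r3 : HasFDerivAt (fun y => (b y).re) (Complex.reCLM.comp C) z :=
    Complex.reCLM.hasFDerivAt.comp z hb
  have r4 : HasFDerivAt (fun y => (b y).im) (Complex.imCLM.comp C) z :=
    Complex.imCLM.hasFDerivAt.comp z hb
  refine ⟨_, (r1.mul r3).add (r2.mul r4), fun v => ?_⟩
  simp [rip]
  ring

lemma aux_tcurl {X : (ℝ × ℝ) × ℝ → ℝ × ℝ} {z : (ℝ × ℝ) × ℝ}
    {L : ((ℝ × ℝ) × ℝ) →L[ℝ] ℝ × ℝ} (h : HasFDerivAt X L z) :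
    tcurl X z = (L ((1, 0), 0)).2 - (L ((0, 1), 0)).1 := by
  rw [tcurl, sp1, sp2, h.fderiv]

lemma aux_tdiv {X : (ℝ × ℝ) × ℝ → ℝ × ℝ} {z : (ℝ × ℝ) × ℝ}
    {L : ((ℝ × ℝ) × ℝ) →L[ℝ] ℝ × ℝ} (h : HasFDerivAt X L z) :
    tdiv X z = (L ((1, 0), 0)).1 + (L ((0, 1), 0)).2 := by
  rw [tdiv, sp1, sp2, h.fderiv]

lemma aux_tgradPerp {g : (ℝ × ℝ) × ℝ → ℝ} {z : (ℝ × ℝ) × ℝ}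
    {L : ((ℝ × ℝ) × ℝ) →L[ℝ] ℝ} (h : HasFDerivAt g L z) :
    tgradPerp g z = (-(L ((0, 1), 0)), L ((1, 0), 0)) := by
  rw [tgradPerp, sp1, sp2, h.fderiv]

lemma aux_tdt {g : (ℝ × ℝ) × ℝ → ℝ} {z : (ℝ × ℝ) × ℝ}
    {L : ((ℝ × ℝ) × ℝ) →L[ℝ] ℝ} (h : HasFDerivAt g L z) :
    tdt g z = L ((0, 0), 1) := by
  rw [tdt, h.fderiv]

lemma aux_normSq (a : ℂ) : Complex.normSq a = rip a a := by
  simp [rip, Complex.normSq_apply]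

/-- evolution of the Ginzburg–Landau energy density for an arbitrary
smooth triple `(w,B,ξ)`:
`∂_t g⁰_ε(w,B) = div(∂_ξ w, ∇_B w) + curl((curl B)(∂_t B + ∇ξ))`
`− (∂_ξ w, Δ_B w + (w/ε²)(1−|w|²)) − (∂_t B + ∇ξ)·(∇^⊥ curl B + (iw, ∇_B w))`. -/
theorem energy_density_evolution
    (Ω : Set (ℝ × ℝ)) (hΩ : IsOpen Ω) (ε : ℝ) (hε : 0 < ε)
    (w : (ℝ × ℝ) × ℝ → ℂ) (B : (ℝ × ℝ) × ℝ → ℝ × ℝ) (ξ : (ℝ × ℝ) × ℝ → ℝ)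
    (hw : ContDiffOn ℝ (⊤ : ℕ∞) w (Ω ×ˢ (Set.univ : Set ℝ)))
    (hB : ContDiffOn ℝ (⊤ : ℕ∞) B (Ω ×ˢ (Set.univ : Set ℝ)))
    (hξ : ContDiffOn ℝ (⊤ : ℕ∞) ξ (Ω ×ˢ (Set.univ : Set ℝ))) :
    ∀ x ∈ Ω, ∀ t : ℝ,
      tdt (tglEnergy ε w B) (x, t)
        = tdiv (fun y => ripv (covt ξ w y) (tcovGrad B w y)) (x, t)
          + tcurl (fun y => (tcurl B y) • (tdt B y + tgrad ξ y)) (x, t)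
          - rip (covt ξ w (x, t))
              (tcovLap B w (x, t)
                + w (x, t) / (ε ^ 2 : ℂ) * (1 - (Complex.normSq (w (x, t)) : ℂ)))
          - rdot (tdt B (x, t) + tgrad ξ (x, t))
              (tgradPerp (tcurl B) (x, t)
                + ripv (Complex.I * w (x, t)) (tcovGrad B w (x, t))) := by
  intro x hx t
  set z : (ℝ × ℝ) × ℝ := (x, t) with hz
  have hnhds : Ω ×ˢ (Set.univ : Set ℝ) ∈ nhds z :=
    (hΩ.prod isOpen_univ).mem_nhds ⟨hx, Set.mem_univ _⟩
  obtain ⟨Dw, sw, w0, w2⟩ := aux_second (hw.contDiffAt hnhds)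
  obtain ⟨DB, sB, B0, B2⟩ := aux_second (hB.contDiffAt hnhds)
  obtain ⟨Dx, sx, x0, x2⟩ := aux_second (hξ.contDiffAt hnhds)
  obtain ⟨W1, hW1, eW1⟩ := w2 ((1, 0), 0)
  obtain ⟨W2, hW2, eW2⟩ := w2 ((0, 1), 0)
  obtain ⟨Wt, hWt, eWt⟩ := w2 ((0, 0), 1)
  obtain ⟨B1, hB1, eB1⟩ := B2 ((1, 0), 0)
  obtain ⟨Bs, hB2, eB2⟩ := B2 ((0, 1), 0)
  obtain ⟨Bt, hBt, eBt⟩ := B2 ((0, 0), 1)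
  obtain ⟨X1, hX1, eX1⟩ := x2 ((1, 0), 0)
  obtain ⟨X2, hX2, eX2⟩ := x2 ((0, 1), 0)
  obtain ⟨P1, hP1, eP1⟩ := aux_cov (-Complex.I) hW1 w0 B0.fst
  obtain ⟨P2, hP2, eP2⟩ := aux_cov (-Complex.I) hW2 w0 B0.snd
  obtain ⟨Q, hQ, eQ⟩ := aux_cov Complex.I hWt w0 x0
  have hT1 : HasFDerivAt (tcpd1 B w) P1 z := by
    convert hP1 using 1
    funext y; simp only [tcpd1, sp1]; ring
  have hT2 : HasFDerivAt (tcpd2 B w) P2 z := by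
    convert hP2 using 1
    funext y; simp only [tcpd2, sp2]; ring
  have hC : HasFDerivAt (covt ξ w) Q z := hQ
  have hK : HasFDerivAt (tcurl B) _ z := hB1.snd.sub hB2.fst
  obtain ⟨N1, hN1, eN1⟩ := aux_rip hT1 hT1
  obtain ⟨N2, hN2, eN2⟩ := aux_rip hT2 hT2
  obtain ⟨N0, hN0, eN0⟩ := aux_rip w0 w0
  obtain ⟨R1, hR1, eR1⟩ := aux_rip hC hT1
  obtain ⟨R2, hR2, eR2⟩ := aux_rip hC hT2
  have hE := ((((hN1.add hN2).add ((((hasFDerivAt_const (1:ℝ) z).sub hN0).pow 2).mul_const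
      ((2 * ε ^ 2)⁻¹))).add (hK.pow 2)).const_mul (1 / 2 : ℝ)).congr_of_eventuallyEq
    (f₁ := tglEnergy ε w B) (Filter.Eventually.of_forall fun y => by
      simp [tglEnergy, aux_normSq, div_eq_mul_inv, tcurl, sp1, sp2])
  have hV : HasFDerivAt (fun y => ripv (covt ξ w y) (tcovGrad B w y)) (R1.prod R2) z :=
    hR1.prodMk hR2
  have hG : HasFDerivAt (fun y => (tcurl B y) • (tdt B y + tgrad ξ y)) _ z :=
    hK.smul (hBt.add (hX1.prodMk hX2))
  have s1 := sw ((0, 0), 1) ((1, 0), 0)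
  have s2 := sw ((0, 0), 1) ((0, 1), 0)
  have s3 := sB ((0, 0), 1) ((1, 0), 0)
  have s4 := sB ((0, 0), 1) ((0, 1), 0)
  have s5 := sx ((0, 1), 0) ((1, 0), 0)
  have eL1 : tcpd1 B (tcpd1 B w) z = P1 ((1, 0), 0) - Complex.I * ((B z).1 : ℂ) * tcpd1 B w z := by
    rw [tcpd1, sp1, hT1.fderiv]
  have eL2 : tcpd2 B (tcpd2 B w) z = P2 ((0, 1), 0) - Complex.I * ((B z).2 : ℂ) * tcpd2 B w z := by
    rw [tcpd2, sp2, hT2.fderiv]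
  have ew : w z / (ε ^ 2 : ℂ) * (1 - (Complex.normSq (w z) : ℂ))
      = w z * (((ε ^ 2)⁻¹ * (1 - Complex.normSq (w z)) : ℝ) : ℂ) := by
    push_cast; ring
  have eG := aux_tcurl hG
  have eK := aux_tgradPerp hK
  have eE := aux_tdt hE
  have eV := aux_tdiv hV
  rw [eE, eV, eG, eK, tcovLap, eL1, eL2, ew]
  have e2 : (2 * ε ^ 2)⁻¹ = 1 / 2 * (ε ^ 2)⁻¹ := by
    rw [mul_inv]; norm_num
  rw [e2]
  clear hE hV hG eG eK eE eV ew e2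
  generalize hk : (ε ^ 2)⁻¹ = k
  rw [aux_normSq]
  have er : ∀ (a : ℂ) (r : ℝ), a * (r : ℂ) = ⟨a.re * r, a.im * r⟩ := by
    intro a r
    apply Complex.ext <;> simp
  rw [er]
  simp [eN1, eN2, eN0, eR1, eR2, eP1, eP2, eQ, eW1, eW2, eWt, eB1, eB2, eBt, eX1, eX2, s1, s2,
    s3, s4, s5, aux_normSq, rip, ripv, rdot, tcovGrad, covt, tcpd1, tcpd2, tcurl, sp1, sp2, tdt,
    tgrad]
  ring

end
end

section
/- Let Ω ⊆ ℝ² be open and let w : Ω × ℝ → ℂ, B : Ω × ℝ → ℝ², ξ : Ω × ℝ → ℝ be smooth (not necessarily solutions of any equation). Then the conservation law ∂_t μ(w,B) + curl V(w,B,ξ) = 0 holds pointwise on Ω × ℝ, where curl V := ∂₁V₂ − ∂₂V₁. -/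
noncomputable section

open Complex

theorem fderiv_apply_comm_aux {E : Type*} [NormedAddCommGroup E] [NormedSpace ℝ E]
    {f : (ℝ × ℝ) × ℝ → E} {z : (ℝ × ℝ) × ℝ} (hf : ContDiffAt ℝ (⊤ : ℕ∞) f z)
    (a b : (ℝ × ℝ) × ℝ) :
    fderiv ℝ (fun y => fderiv ℝ f y a) z b = fderiv ℝ (fun y => fderiv ℝ f y b) z a := by
  have h2 : DifferentiableAt ℝ (fderiv ℝ f) z :=
    (hf.fderiv_right (m := 1) (by norm_cast)).differentiableAt (by simp)
  have key : ∀ c d : (ℝ × ℝ) × ℝ,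
      fderiv ℝ (fun y => fderiv ℝ f y c) z d = fderiv ℝ (fderiv ℝ f) z d c := by
    intro c d
    rw [fderiv_clm_apply h2 (differentiableAt_const c)]
    simp
  rw [key, key]
  exact (hf.isSymmSndFDerivAt (by simp; norm_cast)) b a

theorem contDiffAt_fderiv_apply_aux {E : Type*} [NormedAddCommGroup E] [NormedSpace ℝ E]
    {f : (ℝ × ℝ) × ℝ → E} {z : (ℝ × ℝ) × ℝ} (hf : ContDiffAt ℝ (⊤ : ℕ∞) f z)
    (a : (ℝ × ℝ) × ℝ) : ContDiffAt ℝ (⊤ : ℕ∞) (fun y => fderiv ℝ f y a) z :=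
  (hf.fderiv_right (m := (⊤ : ℕ∞)) (by norm_cast)).clm_apply contDiffAt_const

theorem contDiffAt_rip_aux {f g : (ℝ × ℝ) × ℝ → ℂ} {z : (ℝ × ℝ) × ℝ}
    (hf : ContDiffAt ℝ (⊤ : ℕ∞) f z) (hg : ContDiffAt ℝ (⊤ : ℕ∞) g z) :
    ContDiffAt ℝ (⊤ : ℕ∞) (fun y => rip (f y) (g y)) z := by
  have re : ∀ {h : (ℝ × ℝ) × ℝ → ℂ}, ContDiffAt ℝ (⊤ : ℕ∞) h z →
      ContDiffAt ℝ (⊤ : ℕ∞) (fun y => (h y).re) z := fun hh =>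
    Complex.reCLM.contDiff.contDiffAt.comp z hh
  have im : ∀ {h : (ℝ × ℝ) × ℝ → ℂ}, ContDiffAt ℝ (⊤ : ℕ∞) h z →
      ContDiffAt ℝ (⊤ : ℕ∞) (fun y => (h y).im) z := fun hh =>
    Complex.imCLM.contDiff.contDiffAt.comp z hh
  exact ((re hf).mul (re hg)).add ((im hf).mul (im hg))

theorem contDiffAt_ofReal_aux {f : (ℝ × ℝ) × ℝ → ℝ} {z : (ℝ × ℝ) × ℝ}
    (hf : ContDiffAt ℝ (⊤ : ℕ∞) f z) :
    ContDiffAt ℝ (⊤ : ℕ∞) (fun y => (f y : ℂ)) z :=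
  Complex.ofRealCLM.contDiff.contDiffAt.comp z hf

/-- Abstract form: with current `J`, connection `B` and scalars `p`, `ξ`. -/
theorem conservation_aux
    {J B : (ℝ × ℝ) × ℝ → ℝ × ℝ} {p ξ : (ℝ × ℝ) × ℝ → ℝ} {z : (ℝ × ℝ) × ℝ}
    (hJ : ContDiffAt ℝ (⊤ : ℕ∞) J z) (hB : ContDiffAt ℝ (⊤ : ℕ∞) B z)
    (hp : ContDiffAt ℝ (⊤ : ℕ∞) p z) (hξ : ContDiffAt ℝ (⊤ : ℕ∞) ξ z) :
    tdt (tcurl (fun y => J y + B y)) z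
      + tcurl (fun y => tgrad p y - tdt J y - (tdt B y + tgrad ξ y)) z = 0 := by
  have hX : ContDiffAt ℝ (⊤ : ℕ∞) (fun y => J y + B y) z := hJ.add hB
  have D : ∀ {E : Type} [NormedAddCommGroup E] [NormedSpace ℝ E] {f : (ℝ × ℝ) × ℝ → E},
      ContDiffAt ℝ (⊤ : ℕ∞) f z → ∀ a, HasFDerivAt (fun y => fderiv ℝ f y a)
        (fderiv ℝ (fun y => fderiv ℝ f y a) z) z := fun hf a =>
    ((contDiffAt_fderiv_apply_aux hf a).differentiableAt (by simp)).hasFDerivAt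
  have e1 := ((D hX ((1, 0), 0)).snd.sub (D hX ((0, 1), 0)).fst).fderiv
  have e2 := ((((D hp ((1, 0), 0)).prodMk (D hp ((0, 1), 0))).sub (D hJ ((0, 0), 1))).sub
    ((D hB ((0, 0), 1)).add ((D hξ ((1, 0), 0)).prodMk (D hξ ((0, 1), 0))))).fderiv
  have s : ∀ a b, fderiv ℝ (fun y => fderiv ℝ (fun y => J y + B y) y a) z b
      = fderiv ℝ (fun y => fderiv ℝ J y b) z a + fderiv ℝ (fun y => fderiv ℝ B y b) z a := by
    intro a b
    rw [fderiv_apply_comm_aux hX a b]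
    have ev : (fun y => fderiv ℝ (fun y => J y + B y) y b) =ᶠ[nhds z]
        (fun y => fderiv ℝ J y b + fderiv ℝ B y b) := by
      filter_upwards [(hJ.of_le (m := 1) (by norm_cast)).eventually (by simp),
        (hB.of_le (m := 1) (by norm_cast)).eventually (by simp)] with y h1 h2
      rw [fderiv_fun_add (h1.differentiableAt (by simp)) (h2.differentiableAt (by simp))]
      rfl
    rw [ev.fderiv_eq]
    exact congrArg (fun L => L a) ((D hJ b).add (D hB b)).fderiv
  have f1 : tdt (tcurl (fun y => J y + B y)) z = _ := congrArg (fun L => L ((0, 0), 1)) e1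
  have f2 : sp1 (fun y => tgrad p y - tdt J y - (tdt B y + tgrad ξ y)) z = _ :=
    congrArg (fun L => L ((1, 0), 0)) e2
  have f3 : sp2 (fun y => tgrad p y - tdt J y - (tdt B y + tgrad ξ y)) z = _ :=
    congrArg (fun L => L ((0, 1), 0)) e2
  rw [f1]
  unfold tcurl
  rw [f2, f3]
  have cp := fderiv_apply_comm_aux hp ((1, 0), 0) ((0, 1), 0)
  have cξ := fderiv_apply_comm_aux hξ ((1, 0), 0) ((0, 1), 0)
  simp [s, cp, cξ]
  ring

/-- conservation law `∂_t μ(w,B) + curl V(w,B,ξ) = 0` pointwise on `Ω × ℝ`. -/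
theorem vorticity_conservation_law
    (Ω : Set (ℝ × ℝ)) (hΩ : IsOpen Ω)
    (w : (ℝ × ℝ) × ℝ → ℂ) (B : (ℝ × ℝ) × ℝ → ℝ × ℝ) (ξ : (ℝ × ℝ) × ℝ → ℝ)
    (hw : ContDiffOn ℝ (⊤ : ℕ∞) w (Ω ×ˢ (Set.univ : Set ℝ)))
    (hB : ContDiffOn ℝ (⊤ : ℕ∞) B (Ω ×ˢ (Set.univ : Set ℝ)))
    (hξ : ContDiffOn ℝ (⊤ : ℕ∞) ξ (Ω ×ˢ (Set.univ : Set ℝ))) :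
    ∀ x ∈ Ω, ∀ t : ℝ,
      tdt (tvort w B) (x, t) + tcurl (tvel w B ξ) (x, t) = 0 := by
  intro x hx t
  have hS : Ω ×ˢ (Set.univ : Set ℝ) ∈ nhds (x, t) :=
    (hΩ.prod isOpen_univ).mem_nhds ⟨hx, Set.mem_univ t⟩
  have w0 := hw.contDiffAt hS
  have B0 := hB.contDiffAt hS
  have ξ0 := hξ.contDiffAt hS
  have Iw : ContDiffAt ℝ (⊤ : ℕ∞) (fun y => Complex.I * w y) (x, t) := contDiffAt_const.mul w0
  refine conservation_aux
    (J := fun y => ripv (Complex.I * w y) (tcovGrad B w y))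
    (p := fun y => rip (Complex.I * w y) (covt ξ w y)) ?_ B0 ?_ ξ0
  · refine ContDiffAt.prodMk (contDiffAt_rip_aux Iw ?_) (contDiffAt_rip_aux Iw ?_)
    · exact (contDiffAt_fderiv_apply_aux w0 _).sub
        ((contDiffAt_const.mul (contDiffAt_ofReal_aux B0.fst)).mul w0)
    · exact (contDiffAt_fderiv_apply_aux w0 _).sub
        ((contDiffAt_const.mul (contDiffAt_ofReal_aux B0.snd)).mul w0)
  · refine contDiffAt_rip_aux Iw ?_
    exact (contDiffAt_fderiv_apply_aux w0 _).add
        ((contDiffAt_const.mul (contDiffAt_ofReal_aux ξ0)).mul w0)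

end
end

section
/- Let Ω ⊆ ℝ² be open and let w : Ω × ℝ → ℂ, B : Ω × ℝ → ℝ², ξ : Ω × ℝ → ℝ be smooth (not necessarily solutions of any equation). Then pointwise on Ω × ℝ: V(w,B,ξ) + ∂_t B + ∇ξ = 2(∂_ξ w, i∇_B w) + |w|²(∂_t B + ∇ξ). -/
noncomputable section

open Complex

theorem aux_rip_s8 {f g : (ℝ × ℝ) × ℝ → ℂ} {z : (ℝ × ℝ) × ℝ}
    (hf : DifferentiableAt ℝ f z) (hg : DifferentiableAt ℝ g z) :
    DifferentiableAt ℝ (fun y => rip (f y) (g y)) z ∧ ∀ e,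
    fderiv ℝ (fun y => rip (f y) (g y)) z e
      = rip (fderiv ℝ f z e) (g z) + rip (f z) (fderiv ℝ g z e) := by
  have h1 := Complex.reCLM.hasFDerivAt.comp z hf.hasFDerivAt
  have h2 := Complex.imCLM.hasFDerivAt.comp z hf.hasFDerivAt
  have h3 := Complex.reCLM.hasFDerivAt.comp z hg.hasFDerivAt
  have h4 := Complex.imCLM.hasFDerivAt.comp z hg.hasFDerivAt
  have h : HasFDerivAt (fun y => rip (f y) (g y)) _ z := (h1.mul h3).add (h2.mul h4)
  refine ⟨h.differentiableAt, fun e => ?_⟩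
  rw [h.fderiv]
  simp [rip]
  ring

theorem aux_gauge {w : (ℝ × ℝ) × ℝ → ℂ} {b : (ℝ × ℝ) × ℝ → ℝ} {z : (ℝ × ℝ) × ℝ}
    {e : (ℝ × ℝ) × ℝ} {s : ℝ}
    (hw : DifferentiableAt ℝ w z) (hw' : DifferentiableAt ℝ (fderiv ℝ w) z)
    (hb : DifferentiableAt ℝ b z) :
    DifferentiableAt ℝ (fun y => fderiv ℝ w y e + (s : ℂ) * (Complex.I * (b y : ℂ) * w y)) z ∧
    ∀ e', fderiv ℝ (fun y => fderiv ℝ w y e + (s : ℂ) * (Complex.I * (b y : ℂ) * w y)) z e'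
      = fderiv ℝ (fderiv ℝ w) z e' e
        + (s : ℂ) * (Complex.I * ((fderiv ℝ b z e' : ℝ) : ℂ) * w z
          + Complex.I * (b z : ℂ) * fderiv ℝ w z e') := by
  have h1 : HasFDerivAt (fun y => fderiv ℝ w y e) _ z :=
    (ContinuousLinearMap.apply ℝ ℂ e).hasFDerivAt.comp z hw'.hasFDerivAt
  have h2 : HasFDerivAt (fun y => (b y : ℂ)) _ z :=
    Complex.ofRealCLM.hasFDerivAt.comp z hb.hasFDerivAt
  have h := h1.add (((h2.const_mul Complex.I).mul hw.hasFDerivAt).const_mul (s : ℂ))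
  refine ⟨h.differentiableAt, fun e' => ?_⟩
  have h' := h.fderiv
  erw [h']
  simp
  ring

/-- The scalar identity in each direction. -/
theorem aux_main {w : (ℝ × ℝ) × ℝ → ℂ} {b ξ : (ℝ × ℝ) × ℝ → ℝ} {z : (ℝ × ℝ) × ℝ}
    (e τ : (ℝ × ℝ) × ℝ)
    (hw : DifferentiableAt ℝ w z) (hw' : DifferentiableAt ℝ (fderiv ℝ w) z)
    (hsym : fderiv ℝ (fderiv ℝ w) z e τ = fderiv ℝ (fderiv ℝ w) z τ e)
    (hb : DifferentiableAt ℝ b z) (hξ : DifferentiableAt ℝ ξ z) :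
    DifferentiableAt ℝ (fun y => rip (Complex.I * w y)
        (fderiv ℝ w y e - Complex.I * (b y : ℂ) * w y)) z ∧
    fderiv ℝ (fun y => rip (Complex.I * w y)
        (fderiv ℝ w y τ + Complex.I * (ξ y : ℂ) * w y)) z e
      - fderiv ℝ (fun y => rip (Complex.I * w y)
        (fderiv ℝ w y e - Complex.I * (b y : ℂ) * w y)) z τ
      = 2 * rip (fderiv ℝ w z τ + Complex.I * (ξ z : ℂ) * w z)
          (Complex.I * (fderiv ℝ w z e - Complex.I * (b z : ℂ) * w z))
        + Complex.normSq (w z) * (fderiv ℝ b z τ + fderiv ℝ ξ z e) := by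
  have hI : DifferentiableAt ℝ (fun y => Complex.I * w y) z := hw.const_mul _
  have hI' : ∀ v, fderiv ℝ (fun y => Complex.I * w y) z v = Complex.I * fderiv ℝ w z v := by
    intro v
    rw [(hw.hasFDerivAt.const_mul Complex.I).fderiv]
    simp
  obtain ⟨g1, g2⟩ := aux_gauge (e := e) (s := -1) hw hw' hb
  obtain ⟨k1, k2⟩ := aux_gauge (e := τ) (s := 1) hw hw' hξ
  have e1 : (fun y => fderiv ℝ w y e + ((-1 : ℝ) : ℂ) * (Complex.I * (b y : ℂ) * w y))
      = fun y => fderiv ℝ w y e - Complex.I * (b y : ℂ) * w y := by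
    funext y; push_cast; ring
  have e2 : (fun y => fderiv ℝ w y τ + ((1 : ℝ) : ℂ) * (Complex.I * (ξ y : ℂ) * w y))
      = fun y => fderiv ℝ w y τ + Complex.I * (ξ y : ℂ) * w y := by
    funext y; push_cast; ring
  rw [e1] at g1 g2
  rw [e2] at k1 k2
  obtain ⟨p1, p2⟩ := aux_rip_s8 hI g1
  obtain ⟨q1, q2⟩ := aux_rip_s8 hI k1
  refine ⟨p1, ?_⟩
  rw [p2, q2, g2, k2, hI', hI', hsym]
  simp [rip, Complex.normSq_apply]
  ring

/-- `V(w,B,ξ) + ∂_t B + ∇ξ = 2(∂_ξ w, i∇_B w) + |w|²(∂_t B + ∇ξ)`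
pointwise on `Ω × ℝ`. -/
theorem velocity_rewrite
    (Ω : Set (ℝ × ℝ)) (hΩ : IsOpen Ω)
    (w : (ℝ × ℝ) × ℝ → ℂ) (B : (ℝ × ℝ) × ℝ → ℝ × ℝ) (ξ : (ℝ × ℝ) × ℝ → ℝ)
    (hw : ContDiffOn ℝ (⊤ : ℕ∞) w (Ω ×ˢ (Set.univ : Set ℝ)))
    (hB : ContDiffOn ℝ (⊤ : ℕ∞) B (Ω ×ˢ (Set.univ : Set ℝ)))
    (hξ : ContDiffOn ℝ (⊤ : ℕ∞) ξ (Ω ×ˢ (Set.univ : Set ℝ))) :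
    ∀ x ∈ Ω, ∀ t : ℝ,
      tvel w B ξ (x, t) + tdt B (x, t) + tgrad ξ (x, t)
        = (2 : ℝ) • ripv (covt ξ w (x, t))
            (Complex.I * tcpd1 B w (x, t), Complex.I * tcpd2 B w (x, t))
          + (Complex.normSq (w (x, t))) • (tdt B (x, t) + tgrad ξ (x, t)) := by
  intro x hx t
  have hmem : (Ω ×ˢ (Set.univ : Set ℝ)) ∈ nhds (x, t) :=
    (hΩ.prod isOpen_univ).mem_nhds ⟨hx, trivial⟩
  have cw := hw.contDiffAt hmem
  have cB := hB.contDiffAt hmem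
  have cξ := hξ.contDiffAt hmem
  have dw : DifferentiableAt ℝ w (x, t) := cw.differentiableAt (by simp)
  have dB : DifferentiableAt ℝ B (x, t) := cB.differentiableAt (by simp)
  have dξ : DifferentiableAt ℝ ξ (x, t) := cξ.differentiableAt (by simp)
  have h2 : (2 : WithTop ℕ∞) ≤ ((⊤ : ℕ∞) : WithTop ℕ∞) :=
    WithTop.coe_le_coe.2 (le_top : (2 : ℕ∞) ≤ ⊤)
  have dw' : DifferentiableAt ℝ (fderiv ℝ w) (x, t) :=
    (cw.fderiv_right (m := 1) (by rw [one_add_one_eq_two]; exact h2)).differentiableAt (by simp)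
  have hs : IsSymmSndFDerivAt ℝ w (x, t) :=
    cw.isSymmSndFDerivAt (by simpa using h2)
  have b1 : ∀ e, fderiv ℝ (fun y => (B y).1) (x, t) e = (fderiv ℝ B (x, t) e).1 := by
    intro e; rw [fderiv.fst dB]; rfl
  have b2 : ∀ e, fderiv ℝ (fun y => (B y).2) (x, t) e = (fderiv ℝ B (x, t) e).2 := by
    intro e; rw [fderiv.snd dB]; rfl
  obtain ⟨p1, p2⟩ := aux_main ((1, 0), 0) ((0, 0), 1) dw dw' (hs.eq _ _) dB.fst dξ
  obtain ⟨q1, q2⟩ := aux_main ((0, 1), 0) ((0, 0), 1) dw dw' (hs.eq _ _) dB.snd dξ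
  rw [b1] at p2
  rw [b2] at q2
  have hpair := (p1.hasFDerivAt.prodMk q1.hasFDerivAt).fderiv
  have ht : tdt (fun y => ripv (Complex.I * w y) (tcovGrad B w y)) (x, t) = _ :=
    congrArg (fun L => L ((0, 0), 1)) hpair
  unfold tvel
  rw [ht]
  ext
  · simp [tgrad, ripv, tdt, sp1, covt, tcpd1] at p2 ⊢
    linarith
  · simp [tgrad, ripv, tdt, sp2, covt, tcpd2] at q2 ⊢
    linarith
end
end

section
/- Let Ω ⊆ ℝ² be open, ε > 0, h_ex ∈ ℝ, and let f, h₀ : Ω → ℝ be smooth with Δf = f and Δh₀ = h₀ on Ω; set Z := ∇f − h_ex ∇^⊥ h₀. Suppose u : Ω × ℝ → ℂ, A : Ω × ℝ → ℝ², Φ : Ω × ℝ → ℝ are smooth and satisfy ∂_t u + iΦu = Δ_A u + (u/ε²)(1−|u|²) and ∂_t A + ∇Φ = ∇^⊥ curl A + (iu, ∇_A u) pointwise on Ω × ℝ. Then v := u e^{−if} and B := A − h_ex ∇^⊥ h₀ satisfy, pointwise on Ω × ℝ with h' := curl B: ∂_t v + iΦv = Δ_B v + (v/ε²)(1−|v|²)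 + 2i ∇_B v · Z + ivf − v|Z|², and ∂_t B + ∇Φ = ∇^⊥ h' + (iv, ∇_B v) + |v|²∇f − (|v|²−1) h_ex ∇^⊥ h₀. -/
noncomputable section

open Complex

theorem aux_cd_fderiv {E F : Type*} [NormedAddCommGroup E] [NormedSpace ℝ E]
    [NormedAddCommGroup F] [NormedSpace ℝ F] {f : E → F} {x : E}
    (hf : ContDiffAt ℝ (⊤ : ℕ∞) f x) (w : E) :
    ContDiffAt ℝ (⊤ : ℕ∞) (fun y => fderiv ℝ f y w) x :=
  (hf.fderiv_right (m := (⊤ : ℕ∞)) (by exact_mod_cast le_rfl)).clm_apply contDiffAt_const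

theorem aux_diff {E F : Type*} [NormedAddCommGroup E] [NormedSpace ℝ E]
    [NormedAddCommGroup F] [NormedSpace ℝ F] {f : E → F} {x : E}
    (hf : ContDiffAt ℝ (⊤ : ℕ∞) f x) : DifferentiableAt ℝ f x :=
  hf.differentiableAt (by simp)

/-- Derivative of a function of the space variable alone. -/
theorem aux_fst {F : Type*} [NormedAddCommGroup F] [NormedSpace ℝ F]
    {f : ℝ × ℝ → F} {z : (ℝ × ℝ) × ℝ} (hf : DifferentiableAt ℝ f z.1) (w : (ℝ × ℝ) × ℝ) :
    fderiv ℝ (fun y : (ℝ × ℝ) × ℝ => f y.1) z w = fderiv ℝ f z.1 w.1 := by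
  have h := (hf.hasFDerivAt.comp z (hasFDerivAt_fst (𝕜 := ℝ) (p := z))).fderiv
  have e : (fun y : (ℝ × ℝ) × ℝ => f y.1) = f ∘ Prod.fst := rfl
  rw [e, h]; rfl

/-- Covariant derivative in the direction `w`. -/
def cdir (w : (ℝ × ℝ) × ℝ) (a : (ℝ × ℝ) × ℝ → ℝ) (u : (ℝ × ℝ) × ℝ → ℂ)
    (z : (ℝ × ℝ) × ℝ) : ℂ := fderiv ℝ u z w - Complex.I * (a z : ℂ) * u z

theorem aux_ofReal {a : (ℝ × ℝ) × ℝ → ℝ} {z : (ℝ × ℝ) × ℝ} (ha : DifferentiableAt ℝ a z) :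
    HasFDerivAt (fun y => (a y : ℂ)) (Complex.ofRealCLM.comp (fderiv ℝ a z)) z :=
  (Complex.ofRealCLM.hasFDerivAt (x := a z)).comp z ha.hasFDerivAt

theorem aux_exp {f : ℝ × ℝ → ℝ} {z : (ℝ × ℝ) × ℝ} (hf : DifferentiableAt ℝ f z.1) :
    HasFDerivAt (fun y : (ℝ × ℝ) × ℝ => Complex.exp (-Complex.I * (f y.1 : ℂ)))
      (Complex.exp (-Complex.I * (f z.1 : ℂ)) •
        (-Complex.I) • (Complex.ofRealCLM.comp (fderiv ℝ (fun y : (ℝ × ℝ) × ℝ => f y.1) z))) z := by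
  have h1 : DifferentiableAt ℝ (fun y : (ℝ × ℝ) × ℝ => f y.1) z :=
    hf.comp z differentiableAt_fst
  exact ((aux_ofReal h1).const_mul (-Complex.I)).cexp

theorem aux_mul_exp {f : ℝ × ℝ → ℝ} {z : (ℝ × ℝ) × ℝ} {u : (ℝ × ℝ) × ℝ → ℂ}
    (hf : DifferentiableAt ℝ f z.1) (hu : DifferentiableAt ℝ u z) (w : (ℝ × ℝ) × ℝ) :
    fderiv ℝ (fun y : (ℝ × ℝ) × ℝ => u y * Complex.exp (-Complex.I * (f y.1 : ℂ))) z w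
      = (fderiv ℝ u z w - Complex.I * (fderiv ℝ f z.1 w.1 : ℝ) * u z)
        * Complex.exp (-Complex.I * (f z.1 : ℂ)) := by
  have h := (hu.hasFDerivAt.mul (aux_exp hf)).fderiv
  have e : (fun y : (ℝ × ℝ) × ℝ => u y * Complex.exp (-Complex.I * (f y.1 : ℂ)))
    = u * (fun y : (ℝ × ℝ) × ℝ => Complex.exp (-Complex.I * (f y.1 : ℂ))) := rfl
  rw [e, h]
  simp [aux_fst hf]
  ring

theorem aux_cdir1 {f : ℝ × ℝ → ℝ} {z : (ℝ × ℝ) × ℝ} {u : (ℝ × ℝ) × ℝ → ℂ}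
    {a b ζ : (ℝ × ℝ) × ℝ → ℝ} (w : (ℝ × ℝ) × ℝ)
    (hf : DifferentiableAt ℝ f z.1) (hu : DifferentiableAt ℝ u z)
    (hb : b z = a z - fderiv ℝ f z.1 w.1 + ζ z) :
    cdir w b (fun y : (ℝ × ℝ) × ℝ => u y * Complex.exp (-Complex.I * (f y.1 : ℂ))) z
      = (cdir w a u z - Complex.I * (ζ z : ℂ) * u z)
        * Complex.exp (-Complex.I * (f z.1 : ℂ)) := by
  unfold cdir
  rw [aux_mul_exp hf hu, hb]
  push_cast
  ring

theorem aux_cdir_smooth {z : (ℝ × ℝ) × ℝ} {u : (ℝ × ℝ) × ℝ → ℂ}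
    {a : (ℝ × ℝ) × ℝ → ℝ} (w : (ℝ × ℝ) × ℝ)
    (hu : ContDiffAt ℝ (⊤ : ℕ∞) u z) (ha : DifferentiableAt ℝ a z) :
    DifferentiableAt ℝ (cdir w a u) z := by
  unfold cdir
  have h1 := aux_diff (aux_cd_fderiv hu w)
  have h2 := aux_diff hu
  have h3 := (aux_ofReal ha).differentiableAt
  exact h1.sub ((h3.const_mul _).mul h2)

theorem aux_cdir_mul {z : (ℝ × ℝ) × ℝ} {u u' : (ℝ × ℝ) × ℝ → ℂ}
    {a ζ : (ℝ × ℝ) × ℝ → ℝ} (w : (ℝ × ℝ) × ℝ)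
    (hu : DifferentiableAt ℝ u z) (hu' : DifferentiableAt ℝ u' z) (hζ : DifferentiableAt ℝ ζ z) :
    cdir w a (fun y => u' y - Complex.I * (ζ y : ℂ) * u y) z
      = cdir w a u' z - Complex.I * ((fderiv ℝ ζ z w : ℝ) * u z + ζ z * cdir w a u z) := by
  unfold cdir
  have h := (hu'.hasFDerivAt.sub
    (((aux_ofReal hζ).const_mul Complex.I).mul hu.hasFDerivAt)).fderiv
  have e : (fun y => u' y - Complex.I * (ζ y : ℂ) * u y)
    = u' - (fun y => Complex.I * (ζ y : ℂ)) * u := rfl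
  rw [e, h]
  simp
  ring

theorem aux_cdir2 {U : Set ((ℝ × ℝ) × ℝ)} (hU : IsOpen U)
    {f : ℝ × ℝ → ℝ} {z : (ℝ × ℝ) × ℝ} (hz : z ∈ U) {u : (ℝ × ℝ) × ℝ → ℂ}
    {a b ζ : (ℝ × ℝ) × ℝ → ℝ} (w : (ℝ × ℝ) × ℝ)
    (hf : ∀ y ∈ U, DifferentiableAt ℝ f y.1) (hu : ∀ y ∈ U, ContDiffAt ℝ (⊤ : ℕ∞) u y)
    (ha : DifferentiableAt ℝ a z) (hζ : DifferentiableAt ℝ ζ z)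
    (hb : ∀ y ∈ U, b y = a y - fderiv ℝ f y.1 w.1 + ζ y) :
    cdir w b (cdir w b
        (fun y : (ℝ × ℝ) × ℝ => u y * Complex.exp (-Complex.I * (f y.1 : ℂ)))) z
      = (cdir w a (cdir w a u) z - 2 * Complex.I * (ζ z : ℂ) * cdir w a u z
          - Complex.I * (fderiv ℝ ζ z w : ℝ) * u z - (ζ z : ℂ) ^ 2 * u z)
        * Complex.exp (-Complex.I * (f z.1 : ℂ)) := by
  have he : cdir w b (fun y : (ℝ × ℝ) × ℝ => u y * Complex.exp (-Complex.I * (f y.1 : ℂ)))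
      =ᶠ[nhds z] (fun y => (cdir w a u y - Complex.I * (ζ y : ℂ) * u y)
        * Complex.exp (-Complex.I * (f y.1 : ℂ))) := by
    filter_upwards [hU.mem_nhds hz] with y hy
    exact aux_cdir1 w (hf y hy) (aux_diff (hu y hy)) (hb y hy)
  have hc := aux_cdir_smooth w (hu z hz) ha
  have hd := aux_diff (hu z hz)
  have hd2 : DifferentiableAt ℝ (fun y => cdir w a u y - Complex.I * (ζ y : ℂ) * u y) z :=
    hc.sub (((aux_ofReal hζ).differentiableAt.const_mul _).mul hd)
  have h1 := aux_cdir1 (u := fun y => cdir w a u y - Complex.I * (ζ y : ℂ) * u y)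
    w (hf z hz) hd2 (hb z hz)
  have h2 : cdir w b (cdir w b
        (fun y : (ℝ × ℝ) × ℝ => u y * Complex.exp (-Complex.I * (f y.1 : ℂ)))) z
      = cdir w b (fun y => (cdir w a u y - Complex.I * (ζ y : ℂ) * u y)
        * Complex.exp (-Complex.I * (f y.1 : ℂ))) z := by
    conv_lhs => unfold cdir
    conv_rhs => unfold cdir
    have e1 := he.fderiv_eq (𝕜 := ℝ)
    have e2 := he.eq_of_nhds
    unfold cdir at e1 e2
    rw [e1, e2]
  rw [h2, h1, aux_cdir_mul w hd hc hζ]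
  have hI : Complex.I ^ 2 = -1 := Complex.I_sq
  linear_combination (Complex.exp (-Complex.I * (f z.1 : ℂ)) * (ζ z : ℂ) ^ 2 * u z) * hI

/-- Mixed partial derivatives commute. -/
theorem aux_symm {g : ℝ × ℝ → ℝ} {x : ℝ × ℝ} (hg : ContDiffAt ℝ (⊤ : ℕ∞) g x) :
    pd1 (pd2 g) x = pd2 (pd1 g) x := by
  have hs : IsSymmSndFDerivAt ℝ g x :=
    hg.isSymmSndFDerivAt (by
      rw [minSmoothness_of_isRCLikeNormedField]; exact WithTop.coe_le_coe.2 (le_top : (2 : ℕ∞) ≤ ⊤))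
  have hd : DifferentiableAt ℝ (fderiv ℝ g) x :=
    (hg.fderiv_right (m := (⊤ : ℕ∞)) (by exact_mod_cast le_rfl)).differentiableAt (by simp)
  have key : ∀ a b : ℝ × ℝ, fderiv ℝ (fun y => fderiv ℝ g y a) x b
      = fderiv ℝ (fderiv ℝ g) x b a := by
    intro a b
    have := (hd.hasFDerivAt.clm_apply (hasFDerivAt_const a x)).fderiv
    rw [this]; simp
  show fderiv ℝ (fun y => fderiv ℝ g y (0, 1)) x (1, 0)
    = fderiv ℝ (fun y => fderiv ℝ g y (1, 0)) x (0, 1)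
  rw [key, key]
  exact hs _ _

/-- if `(u,A,Φ)` solves TDGL, then `v = u e^{−if}` and
`B = A − h_ex ∇^⊥ h₀` solve the modified equations with forcing `Z = ∇f − h_ex ∇^⊥ h₀`. -/
theorem modified_equations
    (Ω : Set (ℝ × ℝ)) (hΩ : IsOpen Ω) (ε : ℝ) (hε : 0 < ε) (h_ex : ℝ)
    (f h₀ : ℝ × ℝ → ℝ)
    (hf : ContDiffOn ℝ (⊤ : ℕ∞) f Ω) (hh₀ : ContDiffOn ℝ (⊤ : ℕ∞) h₀ Ω)
    (hΔf : ∀ x ∈ Ω, slap f x = f x) (hΔh₀ : ∀ x ∈ Ω, slap h₀ x = h₀ x)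
    (Z : ℝ × ℝ → ℝ × ℝ) (hZ : Z = fun x => sgrad f x - h_ex • sgradPerp h₀ x)
    (u : (ℝ × ℝ) × ℝ → ℂ) (A : (ℝ × ℝ) × ℝ → ℝ × ℝ) (Φ : (ℝ × ℝ) × ℝ → ℝ)
    (hu : ContDiffOn ℝ (⊤ : ℕ∞) u (Ω ×ˢ (Set.univ : Set ℝ)))
    (hA : ContDiffOn ℝ (⊤ : ℕ∞) A (Ω ×ˢ (Set.univ : Set ℝ)))
    (hΦ : ContDiffOn ℝ (⊤ : ℕ∞) Φ (Ω ×ˢ (Set.univ : Set ℝ)))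
    (heq1 : ∀ x ∈ Ω, ∀ t : ℝ,
      covt Φ u (x, t)
        = tcovLap A u (x, t)
          + u (x, t) / (ε ^ 2 : ℂ) * (1 - (Complex.normSq (u (x, t)) : ℂ)))
    (heq2 : ∀ x ∈ Ω, ∀ t : ℝ,
      tdt A (x, t) + tgrad Φ (x, t)
        = tgradPerp (tcurl A) (x, t)
          + ripv (Complex.I * u (x, t)) (tcovGrad A u (x, t)))
    (v : (ℝ × ℝ) × ℝ → ℂ) (B : (ℝ × ℝ) × ℝ → ℝ × ℝ)
    (hv : v = fun z => u z * Complex.exp (-Complex.I * (f z.1 : ℂ)))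
    (hB : B = fun z => A z - h_ex • sgradPerp h₀ z.1) :
    (∀ x ∈ Ω, ∀ t : ℝ,
      covt Φ v (x, t)
        = tcovLap B v (x, t)
          + v (x, t) / (ε ^ 2 : ℂ) * (1 - (Complex.normSq (v (x, t)) : ℂ))
          + 2 * Complex.I * cdotR (tcovGrad B v (x, t)) (Z x)
          + Complex.I * v (x, t) * (f x : ℂ)
          - v (x, t) * ((rdot (Z x) (Z x) : ℝ) : ℂ))
    ∧ (∀ x ∈ Ω, ∀ t : ℝ,
      tdt B (x, t) + tgrad Φ (x, t)
        = tgradPerp (tcurl B) (x, t)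
          + ripv (Complex.I * v (x, t)) (tcovGrad B v (x, t))
          + (Complex.normSq (v (x, t))) • sgrad f x
          - ((Complex.normSq (v (x, t)) - 1) * h_ex) • sgradPerp h₀ x) := by
  have hU : IsOpen (Ω ×ˢ (Set.univ : Set ℝ)) := hΩ.prod isOpen_univ
  have cf : ∀ x ∈ Ω, ContDiffAt ℝ (⊤ : ℕ∞) f x := fun x hx => hf.contDiffAt (hΩ.mem_nhds hx)
  have ch : ∀ x ∈ Ω, ContDiffAt ℝ (⊤ : ℕ∞) h₀ x := fun x hx => hh₀.contDiffAt (hΩ.mem_nhds hx)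
  have cu : ∀ z ∈ Ω ×ˢ (Set.univ : Set ℝ), ContDiffAt ℝ (⊤ : ℕ∞) u z :=
    fun z hz => hu.contDiffAt (hU.mem_nhds hz)
  have cA : ∀ z ∈ Ω ×ˢ (Set.univ : Set ℝ), ContDiffAt ℝ (⊤ : ℕ∞) A z :=
    fun z hz => hA.contDiffAt (hU.mem_nhds hz)
  have hmem : ∀ x ∈ Ω, ∀ t : ℝ, (x, t) ∈ Ω ×ˢ (Set.univ : Set ℝ) := fun x hx t => ⟨hx, trivial⟩
  have hB1 : ∀ y : (ℝ × ℝ) × ℝ, (B y).1 = (A y).1 - pd1 f y.1 + (Z y.1).1 := by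
    intro y; simp [hB, hZ, sgrad, sgradPerp]; ring
  have hB2 : ∀ y : (ℝ × ℝ) × ℝ, (B y).2 = (A y).2 - pd2 f y.1 + (Z y.1).2 := by
    intro y; simp [hB, hZ, sgrad, sgradPerp]
  have dpf1 : ∀ x ∈ Ω, DifferentiableAt ℝ (pd1 f) x :=
    fun x hx => aux_diff (aux_cd_fderiv (cf x hx) _)
  have dpf2 : ∀ x ∈ Ω, DifferentiableAt ℝ (pd2 f) x :=
    fun x hx => aux_diff (aux_cd_fderiv (cf x hx) _)
  have dph1 : ∀ x ∈ Ω, DifferentiableAt ℝ (pd1 h₀) x :=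
    fun x hx => aux_diff (aux_cd_fderiv (ch x hx) _)
  have dph2 : ∀ x ∈ Ω, DifferentiableAt ℝ (pd2 h₀) x :=
    fun x hx => aux_diff (aux_cd_fderiv (ch x hx) _)
  have eZ1 : (fun x => (Z x).1) = fun x => pd1 f x + h_ex * pd2 h₀ x := by
    funext x; simp [hZ, sgrad, sgradPerp]
  have eZ2 : (fun x => (Z x).2) = fun x => pd2 f x - h_ex * pd1 h₀ x := by
    funext x; simp [hZ, sgrad, sgradPerp]
  have dZ1 : ∀ x ∈ Ω, DifferentiableAt ℝ (fun x => (Z x).1) x := by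
    intro x hx; rw [eZ1]; exact (dpf1 x hx).add ((dph2 x hx).const_mul _)
  have dZ2 : ∀ x ∈ Ω, DifferentiableAt ℝ (fun x => (Z x).2) x := by
    intro x hx; rw [eZ2]; exact (dpf2 x hx).sub ((dph1 x hx).const_mul _)
  have divZ : ∀ x ∈ Ω, fderiv ℝ (fun x => (Z x).1) x (1, 0)
      + fderiv ℝ (fun x => (Z x).2) x (0, 1) = f x := by
    intro x hx
    rw [eZ1, eZ2]
    have h1 := ((dpf1 x hx).hasFDerivAt.add ((dph2 x hx).hasFDerivAt.const_mul h_ex)).fderiv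
    have h2 := ((dpf2 x hx).hasFDerivAt.sub ((dph1 x hx).hasFDerivAt.const_mul h_ex)).fderiv
    have h1' := congrArg (fun L => L (1, 0)) h1
    have h2' := congrArg (fun L => L (0, 1)) h2
    have hs := aux_symm (ch x hx)
    have hl := hΔf x hx
    unfold slap at hl
    change fderiv ℝ (fun x => pd1 f x + h_ex * pd2 h₀ x) x (1, 0)
      = pd1 (pd1 f) x + h_ex * pd1 (pd2 h₀) x at h1'
    change fderiv ℝ (fun x => pd2 f x - h_ex * pd1 h₀ x) x (0, 1)
      = pd2 (pd2 f) x - h_ex * pd2 (pd1 h₀) x at h2'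
    rw [h1', h2', hs]
    linarith
  -- first-order formulas
  have g1 : ∀ x ∈ Ω, ∀ t : ℝ, tcpd1 B v (x, t)
      = (tcpd1 A u (x, t) - Complex.I * ((Z x).1 : ℂ) * u (x, t))
        * Complex.exp (-Complex.I * (f x : ℂ)) := by
    intro x hx t
    rw [hv]
    exact aux_cdir1 (f := f) (u := u) (z := (x, t)) (a := fun y => (A y).1)
      (b := fun y => (B y).1) (ζ := fun y => (Z y.1).1) ((1, 0), 0)
      (aux_diff (cf x hx)) (aux_diff (cu _ (hmem x hx t))) (hB1 _)
  have g2 : ∀ x ∈ Ω, ∀ t : ℝ, tcpd2 B v (x, t)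
      = (tcpd2 A u (x, t) - Complex.I * ((Z x).2 : ℂ) * u (x, t))
        * Complex.exp (-Complex.I * (f x : ℂ)) := by
    intro x hx t
    rw [hv]
    exact aux_cdir1 (f := f) (u := u) (z := (x, t)) (a := fun y => (A y).2)
      (b := fun y => (B y).2) (ζ := fun y => (Z y.1).2) ((0, 1), 0)
      (aux_diff (cf x hx)) (aux_diff (cu _ (hmem x hx t))) (hB2 _)
  have hvx : ∀ z, v z = u z * Complex.exp (-Complex.I * (f z.1 : ℂ)) := by intro z; rw [hv]
  have hnE : ∀ x, Complex.normSq (Complex.exp (-Complex.I * (f x : ℂ))) = 1 := by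
    intro x
    rw [Complex.normSq_eq_norm_sq, Complex.norm_exp]; simp
  have hn : ∀ z, Complex.normSq (v z) = Complex.normSq (u z) := by
    intro z; rw [hvx, Complex.normSq_mul, hnE, mul_one]
  refine ⟨?_, ?_⟩
  · intro x hx t
    have hz := hmem x hx t
    have ht : tdt v (x, t) = tdt u (x, t) * Complex.exp (-Complex.I * (f x : ℂ)) := by
      have := aux_mul_exp (f := f) (z := (x, t)) (aux_diff (cf x hx)) (aux_diff (cu _ hz))
        ((0, 0), 1)
      rw [hv]
      unfold tdt
      rw [this]
      have h0 : fderiv ℝ f x (0, 0) = 0 := (fderiv ℝ f x).map_zero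
      simp [h0]
    have l1 : tcpd1 B (tcpd1 B v) (x, t) = (tcpd1 A (tcpd1 A u) (x, t)
          - 2 * Complex.I * ((Z x).1 : ℂ) * tcpd1 A u (x, t)
          - Complex.I * (fderiv ℝ (fun y : (ℝ × ℝ) × ℝ => (Z y.1).1) (x, t) ((1, 0), 0) : ℝ)
            * u (x, t) - ((Z x).1 : ℂ) ^ 2 * u (x, t))
        * Complex.exp (-Complex.I * (f x : ℂ)) := by
      rw [hv]
      exact aux_cdir2 hU (f := f) (u := u) (z := (x, t)) hz (a := fun y => (A y).1)
        (b := fun y => (B y).1) (ζ := fun y => (Z y.1).1) ((1, 0), 0)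
        (fun y hy => aux_diff (cf y.1 hy.1)) cu (aux_diff (cA _ hz)).fst
        (DifferentiableAt.comp (g := fun x => (Z x).1) (x, t) (dZ1 x hx) differentiableAt_fst)
        (fun y _ => hB1 y)
    have l2 : tcpd2 B (tcpd2 B v) (x, t) = (tcpd2 A (tcpd2 A u) (x, t)
          - 2 * Complex.I * ((Z x).2 : ℂ) * tcpd2 A u (x, t)
          - Complex.I * (fderiv ℝ (fun y : (ℝ × ℝ) × ℝ => (Z y.1).2) (x, t) ((0, 1), 0) : ℝ)
            * u (x, t) - ((Z x).2 : ℂ) ^ 2 * u (x, t))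
        * Complex.exp (-Complex.I * (f x : ℂ)) := by
      rw [hv]
      exact aux_cdir2 hU (f := f) (u := u) (z := (x, t)) hz (a := fun y => (A y).2)
        (b := fun y => (B y).2) (ζ := fun y => (Z y.1).2) ((0, 1), 0)
        (fun y hy => aux_diff (cf y.1 hy.1)) cu (aux_diff (cA _ hz)).snd
        (DifferentiableAt.comp (g := fun x => (Z x).2) (x, t) (dZ2 x hx) differentiableAt_fst)
        (fun y _ => hB2 y)
    rw [aux_fst (f := fun x => (Z x).1) (z := (x, t)) (dZ1 x hx)] at l1
    rw [aux_fst (f := fun x => (Z x).2) (z := (x, t)) (dZ2 x hx)] at l2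
    have hdiv : ((fderiv ℝ (fun x => (Z x).1) x (1, 0) : ℝ) : ℂ)
      + ((fderiv ℝ (fun x => (Z x).2) x (0, 1) : ℝ) : ℂ) = (f x : ℂ) := by
      exact_mod_cast divZ x hx
    have h1 := heq1 x hx t
    unfold covt tcovLap at h1 ⊢
    simp only [cdotR, tcovGrad, rdot]
    rw [l1, l2, g1 x hx t, g2 x hx t, ht, hn, hvx]
    simp only at hdiv ⊢
    have hI : Complex.I ^ 2 = -1 := Complex.I_sq
    push_cast
    linear_combination (Complex.exp (-Complex.I * (f x : ℂ))) * h1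
      + Complex.I * u (x, t) * Complex.exp (-Complex.I * (f x : ℂ)) * hdiv
      + 2 * ((Z x).1 ^ 2 + (Z x).2 ^ 2) * u (x, t)
        * Complex.exp (-Complex.I * (f x : ℂ)) * hI
  · intro x hx t
    have hz := hmem x hx t
    -- derivative of B
    have dP : ∀ y ∈ Ω, DifferentiableAt ℝ (fun x => h_ex • sgradPerp h₀ x) y := by
      intro y hy
      exact ((dph2 y hy).neg.prodMk (dph1 y hy)).const_smul h_ex
    have fB : ∀ y ∈ Ω, ∀ s : ℝ, ∀ w, fderiv ℝ B (y, s) w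
        = fderiv ℝ A (y, s) w
          - h_ex • (-(fderiv ℝ (pd2 h₀) y w.1), fderiv ℝ (pd1 h₀) y w.1) := by
      intro y hy s w
      have h1 : fderiv ℝ (fun x => h_ex • sgradPerp h₀ x) y w.1
          = h_ex • (-(fderiv ℝ (pd2 h₀) y w.1), fderiv ℝ (pd1 h₀) y w.1) := by
        have := (((dph2 y hy).hasFDerivAt.neg.prodMk (dph1 y hy).hasFDerivAt).const_smul
          h_ex).fderiv
        exact congrArg (fun L => L w.1) this
      rw [← h1, ← aux_fst (f := fun x => h_ex • sgradPerp h₀ x) (z := (y, s)) (dP y hy) w, hB]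
      have dq : DifferentiableAt ℝ (fun y : (ℝ × ℝ) × ℝ => h_ex • sgradPerp h₀ y.1) (y, s) :=
        DifferentiableAt.comp (g := fun x => h_ex • sgradPerp h₀ x) (y, s) (dP y hy)
          differentiableAt_fst
      have := ((aux_diff (cA _ (hmem y hy s))).hasFDerivAt.sub dq.hasFDerivAt).fderiv
      exact congrArg (fun L => L w) this
    have htB : tdt B (x, t) = tdt A (x, t) := by
      unfold tdt
      rw [fB x hx t]
      have h0 : ∀ L : ℝ × ℝ →L[ℝ] ℝ, L (0, 0) = 0 := fun L => L.map_zero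
      simp [h0]
    have hc : tcurl B =ᶠ[nhds (x, t)] fun z => tcurl A z - h_ex * h₀ z.1 := by
      filter_upwards [hU.mem_nhds hz] with y hy
      have hl := hΔh₀ y.1 hy.1
      unfold slap at hl
      change fderiv ℝ (pd1 h₀) y.1 (1, 0) + fderiv ℝ (pd2 h₀) y.1 (0, 1) = _ at hl
      unfold tcurl sp1 sp2
      have e1 := fB y.1 hy.1 y.2 ((1, 0), 0)
      have e2 := fB y.1 hy.1 y.2 ((0, 1), 0)
      simp only [Prod.mk.eta] at e1 e2
      rw [e1, e2]
      simp only [Prod.fst_sub, Prod.snd_sub, Prod.smul_fst, Prod.smul_snd, smul_eq_mul]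
      rw [← hl]; ring
    have dcA : DifferentiableAt ℝ (tcurl A) (x, t) := by
      have a1 := (aux_diff (aux_cd_fderiv (cA _ hz) ((1, 0), 0))).snd
      have a2 := (aux_diff (aux_cd_fderiv (cA _ hz) ((0, 1), 0))).fst
      exact a1.sub a2
    have fc : ∀ w, fderiv ℝ (tcurl B) (x, t) w
        = fderiv ℝ (tcurl A) (x, t) w - h_ex * fderiv ℝ h₀ x w.1 := by
      intro w
      rw [hc.fderiv_eq (𝕜 := ℝ), ← aux_fst (z := (x, t)) (aux_diff (ch x hx)) w]
      have dq : DifferentiableAt ℝ (fun y : (ℝ × ℝ) × ℝ => h₀ y.1) (x, t) :=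
        DifferentiableAt.comp (g := h₀) (x, t) (aux_diff (ch x hx)) differentiableAt_fst
      have := (dcA.hasFDerivAt.sub (dq.hasFDerivAt.const_mul h_ex)).fderiv
      exact congrArg (fun L => L w) this
    have h2 := heq2 x hx t
    have gp : tgradPerp (tcurl A) (x, t)
        = tgradPerp (tcurl B) (x, t) + h_ex • sgradPerp h₀ x := by
      unfold tgradPerp sgradPerp sp1 sp2 pd1 pd2
      rw [fc, fc]
      ext <;> simp <;> ring
    have rr : ∀ (c E d : ℂ) (ζ : ℝ), Complex.normSq E = 1 →
        rip (Complex.I * c) d = rip (Complex.I * (c * E)) ((d - Complex.I * ζ * c) * E)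
          + Complex.normSq c * ζ := by
      intro c E d ζ hE
      rw [Complex.normSq_apply] at hE ⊢
      simp only [rip, Complex.mul_re, Complex.mul_im, Complex.sub_re, Complex.sub_im,
        Complex.I_re, Complex.I_im, Complex.ofReal_re, Complex.ofReal_im]
      linear_combination (-(-c.im * d.re + c.re * d.im
        - ζ * (c.re * c.re + c.im * c.im))) * hE
    rw [htB, h2, gp, hn]
    have r1 := rr (u (x, t)) _ (tcpd1 A u (x, t)) (Z x).1 (hnE x)
    have r2 := rr (u (x, t)) _ (tcpd2 A u (x, t)) (Z x).2 (hnE x)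
    rw [← g1 x hx t, ← hvx (x, t)] at r1
    rw [← g2 x hx t, ← hvx (x, t)] at r2
    have z1 := congrFun eZ1 x
    have z2 := congrFun eZ2 x
    rw [z1] at r1
    rw [z2] at r2
    simp only [ripv, tcovGrad]
    rw [r1, r2]
    ext
    · simp [sgrad, sgradPerp]; ring
    · simp [sgrad, sgradPerp]; ring

end
end

section
/- Let Ω ⊆ ℝ² be open, ε > 0, h_ex ∈ ℝ, and let f, h₀ : Ω → ℝ be smooth with Δf = f and Δh₀ = h₀ on Ω; set Z := ∇f − h_ex ∇^⊥ h₀. Suppose v : Ω × ℝ → ℂ and B : Ω × ℝ → ℝ² are smooth and satisfy, pointwise on Ω × ℝ with h' := curl B: ∂_t v + ifv = Δ_B v + (v/ε²)(1−|v|²) + 2i ∇_B v · Z + ivf − v|Z|², and ∂_t B + ∇f = ∇^⊥ h' + (iv, ∇_B v) + |v|²∇f − (|v|²−1) h_ex ∇^⊥ h₀. Then pointwise on Ω × ℝ: ∂_t(div B) = (iv, ∂_t v) + (|v|² − 1) f. -/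
noncomputable section

open Complex

lemma aux_smooth {E F : Type*} [NormedAddCommGroup E] [NormedSpace ℝ E]
    [NormedAddCommGroup F] [NormedSpace ℝ F] {U : Set E} (hU : IsOpen U) {g : E → F}
    (hg : ContDiffOn ℝ (⊤ : ℕ∞) g U) (a : E) :
    ContDiffOn ℝ (⊤ : ℕ∞) (fun z => fderiv ℝ g z a) U :=
  (hg.fderiv_of_isOpen hU (m := (⊤ : ℕ∞)) (by simp)).clm_apply contDiffOn_const

lemma aux_diff_s13 {E F : Type*} [NormedAddCommGroup E] [NormedSpace ℝ E]
    [NormedAddCommGroup F] [NormedSpace ℝ F] {U : Set E} (hU : IsOpen U) {g : E → F}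
    (hg : ContDiffOn ℝ (⊤ : ℕ∞) g U) {z : E} (hz : z ∈ U) : HasFDerivAt g (fderiv ℝ g z) z :=
  ((hg.differentiableOn (by simp)).differentiableAt (hU.mem_nhds hz)).hasFDerivAt

lemma aux_comm {E F : Type*} [NormedAddCommGroup E] [NormedSpace ℝ E]
    [NormedAddCommGroup F] [NormedSpace ℝ F] {U : Set E} (hU : IsOpen U) {g : E → F}
    (hg : ContDiffOn ℝ (⊤ : ℕ∞) g U) {z : E} (hz : z ∈ U) (a b : E) :
    fderiv ℝ (fun y => fderiv ℝ g y a) z b = fderiv ℝ (fun y => fderiv ℝ g y b) z a := by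
  have h1 : HasFDerivAt (fderiv ℝ g) (fderiv ℝ (fderiv ℝ g) z) z :=
    aux_diff_s13 hU (hg.fderiv_of_isOpen hU (m := (⊤ : ℕ∞)) (by simp)) hz
  have hs : IsSymmSndFDerivAt ℝ g z :=
    (hg.contDiffAt (hU.mem_nhds hz)).isSymmSndFDerivAt (by
      simp only [minSmoothness_of_isRCLikeNormedField]; exact WithTop.coe_le_coe.2 le_top)
  have h2 := (h1.clm_apply (hasFDerivAt_const a z)).fderiv
  have h3 := (h1.clm_apply (hasFDerivAt_const b z)).fderiv
  rw [h2, h3]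
  simpa using hs b a

/-- ∂_t(div B) = (iv, ∂_t v) + (|v|² − 1) f for solutions of the
modified equations in the Φ = f gauge. -/
theorem div_B_evolution
(Ω : Set (ℝ × ℝ)) (hΩ : IsOpen Ω) (ε : ℝ) (hε : 0 < ε) (h_ex : ℝ)
    (f h₀ : ℝ × ℝ → ℝ)
    (hf : ContDiffOn ℝ (⊤ : ℕ∞) f Ω) (hh₀ : ContDiffOn ℝ (⊤ : ℕ∞) h₀ Ω)
    (hΔf : ∀ x ∈ Ω, slap f x = f x) (hΔh₀ : ∀ x ∈ Ω, slap h₀ x = h₀ x)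
    (Z : ℝ × ℝ → ℝ × ℝ) (hZ : Z = fun x => sgrad f x - h_ex • sgradPerp h₀ x)
    (v : (ℝ × ℝ) × ℝ → ℂ) (B : (ℝ × ℝ) × ℝ → ℝ × ℝ)
    (hv : ContDiffOn ℝ (⊤ : ℕ∞) v (Ω ×ˢ (Set.univ : Set ℝ)))
    (hB : ContDiffOn ℝ (⊤ : ℕ∞) B (Ω ×ˢ (Set.univ : Set ℝ)))
    (heq1 : ∀ x ∈ Ω, ∀ t : ℝ,
      tdt v (x, t) + Complex.I * (f x : ℂ) * v (x, t)
        = tcovLap B v (x, t)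
          + v (x, t) / (ε ^ 2 : ℂ) * (1 - (Complex.normSq (v (x, t)) : ℂ))
          + 2 * Complex.I * cdotR (tcovGrad B v (x, t)) (Z x)
          + Complex.I * v (x, t) * (f x : ℂ)
          - v (x, t) * ((rdot (Z x) (Z x) : ℝ) : ℂ))
    (heq2 : ∀ x ∈ Ω, ∀ t : ℝ,
      tdt B (x, t) + sgrad f x
        = tgradPerp (tcurl B) (x, t)
          + ripv (Complex.I * v (x, t)) (tcovGrad B v (x, t))
          + (Complex.normSq (v (x, t))) • sgrad f x
          - ((Complex.normSq (v (x, t)) - 1) * h_ex) • sgradPerp h₀ x) :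
    ∀ x ∈ Ω, ∀ t : ℝ,
      tdt (tdiv B) (x, t)
        = rip (Complex.I * v (x, t)) (tdt v (x, t))
          + (Complex.normSq (v (x, t)) - 1) * f x := by
  intro x hx t
  set U : Set ((ℝ × ℝ) × ℝ) := Ω ×ˢ (Set.univ : Set ℝ) with hUdef
  have hU : IsOpen U := hΩ.prod isOpen_univ
  have hz : (x, t) ∈ U := ⟨hx, trivial⟩
  have hfst : HasFDerivAt (Prod.fst : (ℝ × ℝ) × ℝ → ℝ × ℝ)
    (ContinuousLinearMap.fst ℝ (ℝ × ℝ) ℝ) (x, t) := hasFDerivAt_fst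
  -- basic derivatives
  have dv := aux_diff_s13 hU hv hz
  have dB := aux_diff_s13 hU hB hz
  have sv1 := aux_smooth hU hv ((1, 0), 0)
  have sv2 := aux_smooth hU hv ((0, 1), 0)
  have dv1 : HasFDerivAt (sp1 v) (fderiv ℝ (sp1 v) (x, t)) (x, t) := aux_diff_s13 hU sv1 hz
  have dv2 : HasFDerivAt (sp2 v) (fderiv ℝ (sp2 v) (x, t)) (x, t) := aux_diff_s13 hU sv2 hz
  have sB1 := aux_smooth hU hB ((1, 0), 0)
  have sB2 := aux_smooth hU hB ((0, 1), 0)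
  have sBt := aux_smooth hU hB ((0, 0), 1)
  have dB1 : HasFDerivAt (sp1 B) (fderiv ℝ (sp1 B) (x, t)) (x, t) := aux_diff_s13 hU sB1 hz
  have dB2 : HasFDerivAt (sp2 B) (fderiv ℝ (sp2 B) (x, t)) (x, t) := aux_diff_s13 hU sB2 hz
  have dBt : HasFDerivAt (tdt B) (fderiv ℝ (tdt B) (x, t)) (x, t) := aux_diff_s13 hU sBt hz
  have sC : ContDiffOn ℝ (⊤ : ℕ∞) (tcurl B) U := sB1.snd.sub sB2.fst
  have dC1 : HasFDerivAt (sp1 (tcurl B)) (fderiv ℝ (sp1 (tcurl B)) (x, t)) (x, t) :=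
    aux_diff_s13 hU (aux_smooth hU sC ((1, 0), 0)) hz
  have dC2 : HasFDerivAt (sp2 (tcurl B)) (fderiv ℝ (sp2 (tcurl B)) (x, t)) (x, t) :=
    aux_diff_s13 hU (aux_smooth hU sC ((0, 1), 0)) hz
  have df1 : HasFDerivAt (pd1 f) (fderiv ℝ (pd1 f) x) x :=
    aux_diff_s13 hΩ (aux_smooth hΩ hf (1, 0)) hx
  have df2 : HasFDerivAt (pd2 f) (fderiv ℝ (pd2 f) x) x :=
    aux_diff_s13 hΩ (aux_smooth hΩ hf (0, 1)) hx
  have dh1 : HasFDerivAt (pd1 h₀) (fderiv ℝ (pd1 h₀) x) x :=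
    aux_diff_s13 hΩ (aux_smooth hΩ hh₀ (1, 0)) hx
  have dh2 : HasFDerivAt (pd2 h₀) (fderiv ℝ (pd2 h₀) x) x :=
    aux_diff_s13 hΩ (aux_smooth hΩ hh₀ (0, 1)) hx
  have ef1 : HasFDerivAt (fun y : (ℝ × ℝ) × ℝ => pd1 f y.1) _ (x, t) :=
    HasFDerivAt.comp (x, t) (g := pd1 f) df1 hfst
  have ef2 : HasFDerivAt (fun y : (ℝ × ℝ) × ℝ => pd2 f y.1) _ (x, t) :=
    HasFDerivAt.comp (x, t) (g := pd2 f) df2 hfst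
  have eh1 : HasFDerivAt (fun y : (ℝ × ℝ) × ℝ => pd1 h₀ y.1) _ (x, t) :=
    HasFDerivAt.comp (x, t) (g := pd1 h₀) dh1 hfst
  have eh2 : HasFDerivAt (fun y : (ℝ × ℝ) × ℝ => pd2 h₀ y.1) _ (x, t) :=
    HasFDerivAt.comp (x, t) (g := pd2 h₀) dh2 hfst
  have hre : ∀ {w : (ℝ × ℝ) × ℝ → ℂ} {w' : ((ℝ × ℝ) × ℝ) →L[ℝ] ℂ},
      HasFDerivAt w w' (x, t) →
      HasFDerivAt (fun y => (w y).re) (Complex.reCLM.comp w') (x, t) :=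
    fun h => Complex.reCLM.hasFDerivAt.comp (x, t) h
  have him : ∀ {w : (ℝ × ℝ) × ℝ → ℂ} {w' : ((ℝ × ℝ) × ℝ) →L[ℝ] ℂ},
      HasFDerivAt w w' (x, t) →
      HasFDerivAt (fun y => (w y).im) (Complex.imCLM.comp w') (x, t) :=
    fun h => Complex.imCLM.hasFDerivAt.comp (x, t) h
  have hof : ∀ {w : (ℝ × ℝ) × ℝ → ℝ} {w' : ((ℝ × ℝ) × ℝ) →L[ℝ] ℝ},
      HasFDerivAt w w' (x, t) →
      HasFDerivAt (fun y => (w y : ℂ)) (Complex.ofRealCLM.comp w') (x, t) :=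
    fun h => Complex.ofRealCLM.hasFDerivAt.comp (x, t) h
  have dN := (((hre dv).mul (hre dv)).add ((him dv).mul (him dv)))
  -- the two components of the second equation near the point
  have key1 : (fun y => (tdt B y).1) =ᶠ[nhds (x, t)] fun y =>
      (-(sp2 (tcurl B) y) + ((v y).re * (sp1 v y).im - (v y).im * (sp1 v y).re
        - (B y).1 * ((v y).re * (v y).re + (v y).im * (v y).im)))
      + (((v y).re * (v y).re + (v y).im * (v y).im) - 1) * (pd1 f y.1 + h_ex * pd2 h₀ y.1) := by
    filter_upwards [hU.mem_nhds hz] with y hy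
    have h := congrArg Prod.fst (heq2 y.1 hy.1 y.2)
    simp [sgrad, tgradPerp, ripv, rip, tcovGrad, tcpd1, sgradPerp, Complex.normSq_apply] at h
    linear_combination h
  have key2 : (fun y => (tdt B y).2) =ᶠ[nhds (x, t)] fun y =>
      (sp1 (tcurl B) y + ((v y).re * (sp2 v y).im - (v y).im * (sp2 v y).re
        - (B y).2 * ((v y).re * (v y).re + (v y).im * (v y).im)))
      + (((v y).re * (v y).re + (v y).im * (v y).im) - 1) * (pd2 f y.1 - h_ex * pd1 h₀ y.1) := by
    filter_upwards [hU.mem_nhds hz] with y hy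
    have h := congrArg Prod.snd (heq2 y.1 hy.1 y.2)
    simp [sgrad, tgradPerp, ripv, rip, tcovGrad, tcpd2, sgradPerp, Complex.normSq_apply] at h
    linear_combination h
  have r1 := (((dC2.neg).add ((((hre dv).mul (him dv1)).sub ((him dv).mul (hre dv1))).sub
    (dB.fst.mul dN))).add ((dN.sub_const 1).mul (ef1.add (eh2.const_mul h_ex))))
  have r2 := (((dC1).add ((((hre dv).mul (him dv2)).sub ((him dv).mul (hre dv2))).sub
    (dB.snd.mul dN))).add ((dN.sub_const 1).mul (ef2.sub (eh1.const_mul h_ex))))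
  have k1 := congrArg (fun L => L ((1, 0), 0))
    (dBt.fst.unique (r1.congr_of_eventuallyEq key1))
  have k2 := congrArg (fun L => L ((0, 1), 0))
    (dBt.snd.unique (r2.congr_of_eventuallyEq key2))
  -- left-hand side
  have hL : tdt (tdiv B) (x, t)
      = (fderiv ℝ (tdt B) (x, t) ((1, 0), 0)).1 + (fderiv ℝ (tdt B) (x, t) ((0, 1), 0)).2 := by
    have h : HasFDerivAt (tdiv B) _ (x, t) := dB1.fst.add dB2.snd
    have c1 : fderiv ℝ (sp1 B) (x, t) ((0, 0), 1) = fderiv ℝ (tdt B) (x, t) ((1, 0), 0) :=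
      aux_comm hU hB hz _ _
    have c2 : fderiv ℝ (sp2 B) (x, t) ((0, 0), 1) = fderiv ℝ (tdt B) (x, t) ((0, 1), 0) :=
      aux_comm hU hB hz _ _
    rw [tdt, h.fderiv, ← c1, ← c2]
    simp
  have hCC : fderiv ℝ (sp1 (tcurl B)) (x, t) ((0, 1), 0)
      = fderiv ℝ (sp2 (tcurl B)) (x, t) ((1, 0), 0) := aux_comm hU sC hz _ _
  -- covariant second derivatives
  have l1 : HasFDerivAt (tcpd1 B v) _ (x, t) :=
    dv1.sub (((hof dB.fst).const_mul Complex.I).mul dv)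
  have l2 : HasFDerivAt (tcpd2 B v) _ (x, t) :=
    dv2.sub (((hof dB.snd).const_mul Complex.I).mul dv)
  have hlf := hΔf x hx
  have L1 : tcpd1 B (tcpd1 B v) (x, t) = (fderiv ℝ (sp1 v) (x, t) ((1, 0), 0)
      - (Complex.I * ((sp1 B (x, t)).1 : ℂ) * v (x, t)
        + Complex.I * ((B (x, t)).1 : ℂ) * sp1 v (x, t)))
      - Complex.I * ((B (x, t)).1 : ℂ) * (sp1 v (x, t)
        - Complex.I * ((B (x, t)).1 : ℂ) * v (x, t)) := by
    rw [tcpd1, sp1, l1.fderiv]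
    simp [tcpd1, sp1]
    ring
  have L2 : tcpd2 B (tcpd2 B v) (x, t) = (fderiv ℝ (sp2 v) (x, t) ((0, 1), 0)
      - (Complex.I * ((sp2 B (x, t)).2 : ℂ) * v (x, t)
        + Complex.I * ((B (x, t)).2 : ℂ) * sp2 v (x, t)))
      - Complex.I * ((B (x, t)).2 : ℂ) * (sp2 v (x, t)
        - Complex.I * ((B (x, t)).2 : ℂ) * v (x, t)) := by
    rw [tcpd2, sp2, l2.fderiv]
    simp [tcpd2, sp2]
    ring
  have hε2 : v (x, t) / ((ε : ℂ) ^ 2) = v (x, t) * (((ε ^ 2)⁻¹ : ℝ) : ℂ) := by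
    push_cast; rw [div_eq_mul_inv]
  have e1 := heq1 x hx t
  rw [tcovLap, L1, L2, hε2, hZ] at e1
  have e1r := congrArg Complex.re e1
  have e1i := congrArg Complex.im e1
  have q1 : fderiv ℝ v (x, t) ((1, 0), 0) = sp1 v (x, t) := rfl
  have q2 : fderiv ℝ v (x, t) ((0, 1), 0) = sp2 v (x, t) := rfl
  have q3 : fderiv ℝ B (x, t) ((1, 0), 0) = sp1 B (x, t) := rfl
  have q4 : fderiv ℝ B (x, t) ((0, 1), 0) = sp2 B (x, t) := rfl
  have hsym : fderiv ℝ (pd1 h₀) x (0, 1) = fderiv ℝ (pd2 h₀) x (1, 0) :=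
    aux_comm hΩ hh₀ hx _ _
  have hlf' : fderiv ℝ (pd1 f) x (1, 0) + fderiv ℝ (pd2 f) x (0, 1) = f x := hlf
  rw [hL]
  generalize (ε ^ 2)⁻¹ = δ at e1r e1i
  simp only [cdotR, tcovGrad, tcpd1, tcpd2, sgrad, sgradPerp, rdot] at e1r e1i
  simp [q1, q2, q3, q4, -Complex.ofReal_inv, -Complex.ofReal_pow] at k1 k2 e1r e1i
  simp only [rip, Complex.normSq_apply] at e1r e1i ⊢
  simp
  linear_combination k1 + k2 + hCC + ((v (x, t)).im) * e1r - ((v (x, t)).re) * e1i + ((v (x, t)).re ^ 2 + (v (x, t)).im ^ 2 - 1) * (hlf' - h_ex * hsym)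

end
end

section
/- Let Ω ⊆ ℝ² be open, let v : Ω → ℂ be C², and let B : Ω → ℝ² be C¹. Then pointwise on Ω: curl(iv, ∇_B v) + |v|² curl B = −2(∂₁^B v, i∂₂^B v). Equivalently, the vorticity satisfies μ(v,B) = (1 − |v|²) curl B − 2(∂₁^B v, i∂₂^B v). -/
noncomputable section

open Complex

/-- `curl(iv, ∇_B v) + |v|² curl B = −2(∂₁^B v, i∂₂^B v)`, and hence
`μ(v,B) = (1 − |v|²) curl B − 2(∂₁^B v, i∂₂^B v)` pointwise on `Ω`. -/
theorem curl_supercurrent_identity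
    (Ω : Set (ℝ × ℝ)) (hΩ : IsOpen Ω)
    (v : ℝ × ℝ → ℂ) (B : ℝ × ℝ → ℝ × ℝ)
    (hv : ContDiffOn ℝ 2 v Ω) (hB : ContDiffOn ℝ 1 B Ω) :
    ∀ x ∈ Ω,
      (scurl (fun y => ripv (Complex.I * v y) (covGrad B v y)) x
          + Complex.normSq (v x) * scurl B x
        = -2 * rip (cpd1 B v x) (Complex.I * cpd2 B v x))
      ∧ svort v B x
        = (1 - Complex.normSq (v x)) * scurl B x
          - 2 * rip (cpd1 B v x) (Complex.I * cpd2 B v x) := by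
  intro x hx
  have hvx : ContDiffAt ℝ 2 v x := hv.contDiffAt (hΩ.mem_nhds hx)
  have hBx : ContDiffAt ℝ 1 B x := hB.contDiffAt (hΩ.mem_nhds hx)
  have hd : HasFDerivAt v (fderiv ℝ v x) x :=
    (hvx.differentiableAt (by norm_num)).hasFDerivAt
  have hb : HasFDerivAt B (fderiv ℝ B x) x :=
    (hBx.differentiableAt (by norm_num)).hasFDerivAt
  have hD : HasFDerivAt (fderiv ℝ v) (fderiv ℝ (fderiv ℝ v) x) x :=
    ((hvx.fderiv_right (m := 1) (by norm_num)).differentiableAt (by norm_num)).hasFDerivAt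
  have hsymm : fderiv ℝ (fderiv ℝ v) x (1, 0) (0, 1) = fderiv ℝ (fderiv ℝ v) x (0, 1) (1, 0) :=
    (hvx.isSymmSndFDerivAt (by simp)).eq _ _
  have hp := Complex.reCLM.hasFDerivAt.comp x hd
  have hq := Complex.imCLM.hasFDerivAt.comp x hd
  have hb1 := (ContinuousLinearMap.fst ℝ ℝ ℝ).hasFDerivAt.comp x hb
  have hb2 := (ContinuousLinearMap.snd ℝ ℝ ℝ).hasFDerivAt.comp x hb
  have hg (e : ℝ × ℝ) := hD.clm_apply (hasFDerivAt_const e x)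
  have hgr (e : ℝ × ℝ) := Complex.reCLM.hasFDerivAt.comp x (hg e)
  have hgi (e : ℝ × ℝ) := Complex.imCLM.hasFDerivAt.comp x (hg e)
  have h1 := (hq.neg.mul ((hgr (1, 0)).add (hb1.mul hq))).add
    (hp.mul ((hgi (1, 0)).sub (hb1.mul hp)))
  have h2 := (hq.neg.mul ((hgr (0, 1)).add (hb2.mul hq))).add
    (hp.mul ((hgi (0, 1)).sub (hb2.mul hp)))
  have hj := h1.prodMk h2
  have hJ := hj.congr_of_eventuallyEq
    (f₁ := fun y => ripv (Complex.I * v y) (covGrad B v y)) <| by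
    refine Filter.Eventually.of_forall fun y => ?_
    simp [ripv, rip, covGrad, cpd1, cpd2, pd1, pd2]
  have key : scurl (fun y => ripv (Complex.I * v y) (covGrad B v y)) x
          + Complex.normSq (v x) * scurl B x
        = -2 * rip (cpd1 B v x) (Complex.I * cpd2 B v x) := by
    simp only [scurl, pd1, pd2, hJ.fderiv]
    simp [rip, cpd1, cpd2, pd1, pd2, Complex.normSq_apply, hsymm]
    ring
  refine ⟨key, ?_⟩
  have hs : svort v B x
      = scurl (fun y => ripv (Complex.I * v y) (covGrad B v y)) x + scurl B x := by
    have := (hJ.add hb).fderiv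
    simp only [svort, scurl, pd1, pd2, hJ.fderiv]
    erw [this]
    simp only [ContinuousLinearMap.add_apply, Prod.fst_add, Prod.snd_add]
    ring
  rw [hs]
  linarith

end
end
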